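/- (Asymptotic equivalence of operator families coinciding on N.) Assume Hypothesis (H), and let M̃ : H → H be another bounded linear operator such that Re⟨M̃ x, x⟩ ≥ c‖x‖² for all x ∈ H and π_N M π_N = π_N M̃ π_N. Then for every ε ∈ (0, min{1/(2 C_R ‖M‖), 1/(2 C_R ‖M̃‖)}), the operators M + ε⁻¹ A and M̃ + ε⁻¹ A (each with domain dom(A)) are boundedly invertible and ‖ (M + ε⁻¹ A)⁻¹ − (M̃ + ε⁻¹ A)⁻¹ ‖ ≤ κ ε, where κ = [2 C_R (1 + ‖M‖/c)² + C_R] + [2 C_R (1 + ‖M̃‖/c)² + C_R]. -/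

import Mathlib

theorem aux_skew {H : Type*} [NormedAddCommGroup H] [InnerProductSpace ℂ H] [CompleteSpace H]
    (A : H →ₗ.[ℂ] H) (hA_dense : Dense (A.domain : Set H)) (hA_skew : A.adjoint = -A)
    (x : A.domain) : (inner ℂ (A x) (x : H) : ℂ).re = 0 := by
  have h := LinearPMap.adjoint_isFormalAdjoint hA_dense
  rw [hA_skew] at h
  have h1 := h x x
  rw [LinearPMap.neg_apply, inner_neg_left] at h1
  have h2 := congrArg Complex.re h1
  have h3 := inner_re_symm (𝕜 := ℂ) (A x) (x : H)
  simp only [Complex.neg_re] at h2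
  simp only [RCLike.re_to_complex] at h3
  linarith

theorem aux_bound {H : Type*} [NormedAddCommGroup H] [InnerProductSpace ℂ H] [CompleteSpace H]
    (M : H →L[ℂ] H) (c : ℝ) (hc : 0 < c)
    (hM : ∀ x : H, c * ‖x‖ ^ 2 ≤ (inner ℂ (M x) x : ℂ).re)
    (A : H →ₗ.[ℂ] H) (hA_dense : Dense (A.domain : Set H)) (hA_skew : A.adjoint = -A)
    (t : ℝ) (x : A.domain) : ‖(x : H)‖ ≤ ‖M x + t • A x‖ / c := by
  rw [le_div_iff₀ hc]
  by_cases hx : ‖(x : H)‖ = 0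
  · rw [hx, zero_mul]; positivity
  have hx' : 0 < ‖(x : H)‖ := lt_of_le_of_ne (norm_nonneg _) (Ne.symm hx)
  have h0 := aux_skew A hA_dense hA_skew x
  have h1 : (inner ℂ (M x + t • A x) (x : H) : ℂ).re = (inner ℂ (M x) (x : H) : ℂ).re := by
    rw [inner_add_left, ← Complex.coe_smul, inner_smul_left]
    simp [h0]
  have h2 : (inner ℂ (M x + t • A x) (x : H) : ℂ).re ≤ ‖M x + t • A x‖ * ‖(x : H)‖ :=
    re_inner_le_norm (𝕜 := ℂ) _ _
  have h3 := hM x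
  nlinarith

theorem aux_inv {H : Type*} [NormedAddCommGroup H] [InnerProductSpace ℂ H] [CompleteSpace H]
    (M : H →L[ℂ] H) (c : ℝ) (hc : 0 < c)
    (hM : ∀ x : H, c * ‖x‖ ^ 2 ≤ (inner ℂ (M x) x : ℂ).re)
    (A : H →ₗ.[ℂ] H) (hA_dense : Dense (A.domain : Set H)) (hA_skew : A.adjoint = -A)
    (ε : ℝ) (hε : 0 < ε) :
    ∃ B : H →L[ℂ] H, (∀ x : A.domain, B (M (x : H) + ε⁻¹ • A x) = x) ∧
      (∀ y : H, ∃ x : A.domain, M (x : H) + ε⁻¹ • A x = y) := by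
  have hclosed : IsClosed (A.graph : Set (H × H)) := by
    have h := LinearPMap.adjoint_isClosed (T := A) hA_dense
    rw [hA_skew] at h
    have h' : IsClosed ((-A).graph : Set (H × H)) := h
    have hc' : Continuous (fun p : H × H => (p.1, -p.2)) := by fun_prop
    have := h'.preimage hc'
    convert this using 1
    ext p
    simp only [SetLike.mem_coe, Set.mem_preimage, LinearPMap.mem_graph_iff]
    constructor
    · rintro ⟨y, h1, h2⟩
      exact ⟨y, h1, by rw [LinearPMap.neg_apply, h2]⟩
    · rintro ⟨y, h1, h2⟩
      exact ⟨y, h1, by rw [LinearPMap.neg_apply] at h2; exact neg_injective h2⟩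
  haveI : CompleteSpace A.graph := hclosed.completeSpace_coe
  let T : A.graph →L[ℂ] H :=
    (M ∘L ContinuousLinearMap.fst ℂ H H + ε⁻¹ • ContinuousLinearMap.snd ℂ H H) ∘L A.graph.subtypeL
  have hT : ∀ p : A.graph, T p = M p.1.1 + ε⁻¹ • p.1.2 := fun p => rfl
  have hgr : ∀ p : A.graph, ∃ x : A.domain, (x : H) = p.1.1 ∧ A x = p.1.2 := fun p =>
    (LinearPMap.mem_graph_iff A).1 p.2
  have hb1 : ∀ p : A.graph, ‖p.1.1‖ ≤ ‖T p‖ / c := by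
    intro p
    obtain ⟨x, h1, h2⟩ := hgr p
    have := aux_bound M c hc hM A hA_dense hA_skew ε⁻¹ x
    rw [hT, ← h1, ← h2]; exact this
  have hb2 : ∀ p : A.graph, ‖p.1.2‖ ≤ ε * (1 + ‖M‖ / c) * ‖T p‖ := by
    intro p
    have h1 : p.1.2 = ε • (T p - M p.1.1) := by
      rw [hT, add_sub_cancel_left, smul_smul, mul_inv_cancel₀ hε.ne', one_smul]
    have h2 : ‖p.1.2‖ = ε * ‖T p - M p.1.1‖ := by
      conv_lhs => rw [h1]
      rw [norm_smul, Real.norm_of_nonneg hε.le]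
    rw [h2, mul_assoc]
    apply mul_le_mul_of_nonneg_left _ hε.le
    calc _ ≤ ‖T p‖ + ‖M p.1.1‖ := norm_sub_le _ _
      _ ≤ ‖T p‖ + ‖M‖ * (‖T p‖ / c) := by
        gcongr
        exact (M.le_opNorm _).trans (mul_le_mul_of_nonneg_left (hb1 p) (norm_nonneg _))
      _ = _ := by ring
  have hanti : AntilipschitzWith (Real.toNNReal (1 / c + ε * (1 + ‖M‖ / c))) T := by
    apply ContinuousLinearMap.antilipschitz_of_bound
    intro p
    rw [Real.coe_toNNReal _ (by positivity)]
    have e1 : 0 ≤ ε * (1 + ‖M‖ / c) * ‖T p‖ := by positivity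
    have e2 : 0 ≤ ‖T p‖ / c := by positivity
    have e3 : (1 / c + ε * (1 + ‖M‖ / c)) * ‖T p‖ = ‖T p‖ / c + ε * (1 + ‖M‖ / c) * ‖T p‖ := by
      ring
    rw [e3]
    refine max_le (?_ : ‖p.1.1‖ ≤ _) (?_ : ‖p.1.2‖ ≤ _)
    · exact (hb1 p).trans (by linarith)
    · exact (hb2 p).trans (by linarith)
  have hinj : Function.Injective T := hanti.injective
  have hrc : IsClosed (Set.range T) := hanti.isClosed_range T.uniformContinuous
  have hsurj : T.range = ⊤ := by
    have hcl : IsClosed (T.range : Set H) := by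
      convert hrc using 1
      ext y; simp
    haveI : CompleteSpace T.range := hcl.completeSpace_coe
    rw [← Submodule.orthogonal_eq_bot_iff, Submodule.eq_bot_iff]
    intro y hy
    have horth : ∀ x : A.domain, inner ℂ (M x + ε⁻¹ • A x) y = 0 := by
      intro x
      exact (Submodule.mem_orthogonal _ _).1 hy _ ⟨⟨(x, A x), LinearPMap.mem_graph A x⟩, rfl⟩
    have hz : ∀ x : A.domain, inner ℂ (-(ε • (ContinuousLinearMap.adjoint M y))) (x : H)
        = inner ℂ y (A x) := by
      intro x
      have h1 := horth x
      have h2 : inner ℂ y (M x + ε⁻¹ • A x) = 0 := inner_eq_zero_symm.1 h1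
      rw [inner_add_right, ← Complex.coe_smul, inner_smul_right] at h2
      rw [inner_neg_left, ← Complex.coe_smul, inner_smul_left, Complex.conj_ofReal,
        ContinuousLinearMap.adjoint_inner_left]
      have hne : (ε : ℂ) ≠ 0 := by exact_mod_cast hε.ne'
      push_cast at h2
      have h3 : (ε : ℂ) * (inner ℂ y (M x) + (ε : ℂ)⁻¹ * inner ℂ y (A x)) = 0 := by
        rw [h2, mul_zero]
      rw [mul_add, mul_inv_cancel_left₀ hne] at h3
      linear_combination -h3
    have hmem : y ∈ A.adjoint.domain :=
      LinearPMap.mem_adjoint_domain_of_exists y ⟨_, hz⟩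
    have hmem' : y ∈ A.domain := by
      rw [hA_skew] at hmem; exact hmem
    have hzz := hz ⟨y, hmem'⟩
    have h0 := aux_skew A hA_dense hA_skew ⟨y, hmem'⟩
    rw [inner_neg_left, ← Complex.coe_smul, inner_smul_left, Complex.conj_ofReal,
        ContinuousLinearMap.adjoint_inner_left] at hzz
    have h4 := congrArg Complex.re hzz
    have h5 := inner_re_symm (𝕜 := ℂ) (A ⟨y, hmem'⟩) y
    have h6 := inner_re_symm (𝕜 := ℂ) (M y) y
    simp only [RCLike.re_to_complex] at h5 h6
    rw [Complex.neg_re, Complex.re_ofReal_mul, ← h5, ← h6, h0] at h4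
    have h7 : (inner ℂ (M y) y : ℂ).re = 0 := by
      rcases mul_eq_zero.1 (neg_eq_zero.1 h4) with h | h
      · exact absurd h hε.ne'
      · exact h
    have h8 := hM y
    rw [h7] at h8
    have h9 : ‖y‖ ^ 2 ≤ 0 := by
      by_contra hcon
      push Not at hcon
      nlinarith [mul_pos hc hcon]
    exact norm_eq_zero.1 (pow_eq_zero_iff two_ne_zero |>.1 (le_antisymm h9 (sq_nonneg _)))
  let e := ContinuousLinearEquiv.ofBijective T (LinearMap.ker_eq_bot.2 hinj) hsurj
  have he : ∀ p, e p = T p := fun p => rfl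
  refine ⟨(ContinuousLinearMap.fst ℂ H H ∘L A.graph.subtypeL) ∘L (e.symm : H →L[ℂ] A.graph),
    ?_, ?_⟩
  · intro x
    have h1 : M (x : H) + ε⁻¹ • A x = e ⟨(x, A x), LinearPMap.mem_graph A x⟩ := rfl
    rw [h1]
    simp
  · intro y
    obtain ⟨x, h1, h2⟩ := hgr (e.symm y)
    refine ⟨x, ?_⟩
    rw [h1, h2, ← hT, ← he, ContinuousLinearEquiv.apply_symm_apply]

theorem aux_R {H : Type*} [NormedAddCommGroup H] [InnerProductSpace ℂ H] [CompleteSpace H]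
    (M : H →L[ℂ] H) (c : ℝ) (hc : 0 < c)
    (hM : ∀ x : H, c * ‖x‖ ^ 2 ≤ (inner ℂ (M x) x : ℂ).re)
    (A : H →ₗ.[ℂ] H) (hA_dense : Dense (A.domain : Set H)) (hA_skew : A.adjoint = -A)
    (N : Submodule ℂ H) [CompleteSpace N]
    (C_R : ℝ) (hC_R : 0 < C_R)
    (hHb : ∀ x : A.domain,
      ∃ hx : ((Submodule.orthogonalProjection Nᗮ (x : H) : H)) ∈ A.domain,
        (Submodule.orthogonalProjection Nᗮ (A x) : H)
          = A ⟨(Submodule.orthogonalProjection Nᗮ (x : H) : H), hx⟩)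
    (J : Nᗮ →L[ℂ] Nᗮ) (hJ : ‖J‖ ≤ C_R)
    (hJ1 : ∀ (x : A.domain) (hx : (x : H) ∈ Nᗮ),
        J (Submodule.orthogonalProjection Nᗮ (A x)) = ⟨(x : H), hx⟩)
    (ε : ℝ) (hε : 0 < ε) (x : A.domain) :
    ‖(Submodule.orthogonalProjection Nᗮ (x : H) : H)‖
      ≤ ε * C_R * (1 + ‖M‖ / c) * ‖M (x : H) + ε⁻¹ • A x‖ := by
  obtain ⟨hx, hAx⟩ := hHb x
  set f := M (x : H) + ε⁻¹ • A x with hf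
  have h1 : A x = ε • (f - M x) := by
    rw [hf, add_sub_cancel_left, smul_smul, mul_inv_cancel₀ hε.ne', one_smul]
  have h2 := hJ1 ⟨_, hx⟩ (Submodule.coe_mem _)
  have h3 : Submodule.orthogonalProjection Nᗮ
      (A ⟨(Submodule.orthogonalProjection Nᗮ (x : H) : H), hx⟩)
      = Submodule.orthogonalProjection Nᗮ (A x) := by
    rw [← hAx]; simp
  rw [h3] at h2
  have h4 : ‖(Submodule.orthogonalProjection Nᗮ (x : H) : H)‖
      = ‖J (Submodule.orthogonalProjection Nᗮ (A x))‖ := by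
    rw [h2]; rfl
  rw [h4]
  have hb := aux_bound M c hc hM A hA_dense hA_skew ε⁻¹ x
  rw [← hf] at hb
  have h5 : ‖A x‖ ≤ ε * ((1 + ‖M‖ / c) * ‖f‖) := by
    rw [h1, norm_smul, Real.norm_of_nonneg hε.le]
    apply mul_le_mul_of_nonneg_left _ hε.le
    calc _ ≤ ‖f‖ + ‖M x‖ := norm_sub_le _ _
      _ ≤ ‖f‖ + ‖M‖ * (‖f‖ / c) := by
        gcongr
        exact (M.le_opNorm _).trans (mul_le_mul_of_nonneg_left hb (norm_nonneg _))
      _ = _ := by ring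
  calc _ ≤ ‖J‖ * ‖Submodule.orthogonalProjection Nᗮ (A x)‖ := J.le_opNorm _
    _ ≤ C_R * ‖A x‖ := by
      gcongr
      exact Submodule.norm_orthogonalProjection_apply_le _ _
    _ ≤ C_R * (ε * ((1 + ‖M‖ / c) * ‖f‖)) := by gcongr
    _ = _ := by ring


/-- **Asymptotic equivalence of operator families coinciding on N.**
Under Hypothesis (H), if `M̃` is another bounded operator with `Re⟪M̃ x, x⟫ ≥ c‖x‖²` and
`π_N M π_N = π_N M̃ π_N`, then for `ε ∈ (0, min{1/(2 C_R ‖M‖), 1/(2 C_R ‖M̃‖)})` the operators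
`M + ε⁻¹ A` and `M̃ + ε⁻¹ A` are boundedly invertible and
`‖(M + ε⁻¹ A)⁻¹ − (M̃ + ε⁻¹ A)⁻¹‖ ≤ κ ε` with
`κ = [2 C_R (1 + ‖M‖/c)² + C_R] + [2 C_R (1 + ‖M̃‖/c)² + C_R]`. -/
theorem statement9
    {H : Type*} [NormedAddCommGroup H] [InnerProductSpace ℂ H] [CompleteSpace H]
    -- `M` is a bounded operator with `Re⟪M x, x⟫ ≥ c ‖x‖²`, `c > 0`
    (M : H →L[ℂ] H) (c : ℝ) (hc : 0 < c)
    (hM : ∀ x : H, c * ‖x‖ ^ 2 ≤ (inner ℂ (M x) x : ℂ).re)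
    -- `A` is densely defined and skew-selfadjoint
    (A : H →ₗ.[ℂ] H) (hA_dense : Dense (A.domain : Set H)) (hA_skew : A.adjoint = -A)
    -- `N` is a closed subspace, `R = Nᗮ`
    (N : Submodule ℂ H) [CompleteSpace N]
    (C_R : ℝ) (hC_R : 0 < C_R)
    -- Hypothesis (H)(a): `N ⊆ dom A` and `A π_N` is bounded
    (hHa_sub : N ≤ A.domain)
    (hHa_bdd : ∃ Ca : ℝ, ∀ x : A.domain, (x : H) ∈ N → ‖A x‖ ≤ Ca * ‖(x : H)‖)
    -- Hypothesis (H)(b): `π_R A ⊆ A π_R`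
    (hHb : ∀ x : A.domain,
      ∃ hx : ((Submodule.orthogonalProjection Nᗮ (x : H) : H)) ∈ A.domain,
        (Submodule.orthogonalProjection Nᗮ (A x) : H)
          = A ⟨(Submodule.orthogonalProjection Nᗮ (x : H) : H), hx⟩)
    -- Hypothesis (H)(c): the compression `ι_R* A ι_R`, with domain `dom(A) ∩ R`, is a
    -- bijection onto `R` with bounded inverse of norm at most `C_R`
    (hHc : ∃ J : Nᗮ →L[ℂ] Nᗮ, ‖J‖ ≤ C_R ∧
      (∀ (x : A.domain) (hx : (x : H) ∈ Nᗮ),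
        J (Submodule.orthogonalProjection Nᗮ (A x)) = ⟨(x : H), hx⟩) ∧
      (∀ y : Nᗮ, ∃ (x : A.domain) (hx : (x : H) ∈ Nᗮ),
        Submodule.orthogonalProjection Nᗮ (A x) = y))
    (Mt : H →L[ℂ] H)
    (hMt : ∀ x : H, c * ‖x‖ ^ 2 ≤ (inner ℂ (Mt x) x : ℂ).re)
    (hcoincide : ∀ x : H,
      (Submodule.orthogonalProjection N (M ((Submodule.orthogonalProjection N x : H))) : H)
        = (Submodule.orthogonalProjection N (Mt ((Submodule.orthogonalProjection N x : H))) : H))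
    (ε : ℝ)
    (hε : ε ∈ Set.Ioo (0 : ℝ) (min (1 / (2 * C_R * ‖M‖)) (1 / (2 * C_R * ‖Mt‖)))) :
    ∃ (Binv Btinv : H →L[ℂ] H),
      -- `Binv` is the bounded inverse of `M + ε⁻¹ A`
      (∀ x : A.domain, Binv (M (x : H) + ε⁻¹ • A x) = x) ∧
      (∀ y : H, ∃ x : A.domain, M (x : H) + ε⁻¹ • A x = y) ∧
      -- `Btinv` is the bounded inverse of `M̃ + ε⁻¹ A`
      (∀ x : A.domain, Btinv (Mt (x : H) + ε⁻¹ • A x) = x) ∧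
      (∀ y : H, ∃ x : A.domain, Mt (x : H) + ε⁻¹ • A x = y) ∧
      ‖Binv - Btinv‖
        ≤ ((2 * C_R * (1 + ‖M‖ / c) ^ 2 + C_R)
            + (2 * C_R * (1 + ‖Mt‖ / c) ^ 2 + C_R)) * ε := by
  obtain ⟨hε0, -⟩ := hε
  obtain ⟨J, hJ, hJ1, -⟩ := hHc
  obtain ⟨B, hB1, hB2⟩ := aux_inv M c hc hM A hA_dense hA_skew ε hε0
  obtain ⟨Bt, hBt1, hBt2⟩ := aux_inv Mt c hc hMt A hA_dense hA_skew ε hε0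
  refine ⟨B, Bt, hB1, hB2, hBt1, hBt2, ?_⟩
  refine ContinuousLinearMap.opNorm_le_bound _ (by positivity) fun f => ?_
  obtain ⟨u, hu⟩ := hB2 f
  obtain ⟨v, hv⟩ := hBt2 f
  have hBu : B f = u := by rw [← hu]; exact hB1 u
  have hBv : Bt f = v := by rw [← hv]; exact hBt1 v
  rw [ContinuousLinearMap.sub_apply, hBu, hBv]
  have hr := aux_R M c hc hM A hA_dense hA_skew N C_R hC_R hHb J hJ hJ1 ε hε0 u
  have hs := aux_R Mt c hc hMt A hA_dense hA_skew N C_R hC_R hHb J hJ hJ1 ε hε0 v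
  rw [hu] at hr
  rw [hv] at hs
  obtain ⟨hrm, hAr⟩ := hHb u
  obtain ⟨hsm, hAs⟩ := hHb v
  set r : H := (Submodule.orthogonalProjection Nᗮ (u : H) : H) with hrdef
  set s : H := (Submodule.orthogonalProjection Nᗮ (v : H) : H) with hsdef
  set n : H := (Submodule.orthogonalProjection N (u : H) : H) with hndef
  set m : H := (Submodule.orthogonalProjection N (v : H) : H) with hmdef
  have hunr : (u : H) = n + r :=
    (Submodule.starProjection_add_starProjection_orthogonal (K := N) (u : H)).symm
  have hvms : (v : H) = m + s :=
    (Submodule.starProjection_add_starProjection_orthogonal (K := N) (v : H)).symm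
  have hnN : n ∈ N := Submodule.coe_mem _
  have hmN : m ∈ N := Submodule.coe_mem _
  have hdN : n - m ∈ N := sub_mem hnN hmN
  -- the component of the difference in `N`
  have hd : ‖n - m‖ ≤ (‖M‖ * ‖r‖ + ‖Mt‖ * ‖s‖) / c := by
    rw [le_div_iff₀ hc]
    have hsk := aux_skew A hA_dense hA_skew ⟨n - m, hHa_sub hdN⟩
    have hsub : A ⟨n - m, hHa_sub hdN⟩ = (A u - A v) - (A ⟨r, hrm⟩ - A ⟨s, hsm⟩) := by
      rw [← LinearPMap.map_sub, ← LinearPMap.map_sub, ← LinearPMap.map_sub]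
      congr 1
      apply Subtype.ext
      simp only [Submodule.coe_sub, hunr, hvms]
      abel
    have hort : ∀ w ∈ Nᗮ, inner ℂ w (n - m) = 0 := fun w hw =>
      Submodule.inner_left_of_mem_orthogonal hdN hw
    have hr0 : inner ℂ (A ⟨r, hrm⟩) (n - m) = 0 := hort _ (by rw [← hAr]; exact Submodule.coe_mem _)
    have hs0 : inner ℂ (A ⟨s, hsm⟩) (n - m) = 0 := hort _ (by rw [← hAs]; exact Submodule.coe_mem _)
    have hMn : inner ℂ (M m) (n - m) = inner ℂ (Mt m) (n - m) := by
      have h1 := hcoincide m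
      have h2 : (Submodule.orthogonalProjection N m : H) = m :=
        Submodule.starProjection_eq_self_iff.2 hmN
      rw [h2] at h1
      have h3 := Submodule.inner_orthogonalProjection_eq_of_mem_right (K := N) ⟨n - m, hdN⟩ (M m)
      have h4 := Submodule.inner_orthogonalProjection_eq_of_mem_right (K := N) ⟨n - m, hdN⟩ (Mt m)
      rw [← h3, ← h4, Subtype.ext h1]
    have key : M (n - m) + ε⁻¹ • (A u - A v) = Mt s - M r + (Mt m - M m) := by
      have h1 : M u + ε⁻¹ • A u = Mt v + ε⁻¹ • A v := by rw [hu, hv]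
      rw [hunr, hvms, map_add, map_add] at h1
      rw [map_sub, smul_sub]
      have h2 : ε⁻¹ • A u = Mt m + Mt s + ε⁻¹ • A v - (M n + M r) := by
        rw [← h1]; abel
      rw [h2]; abel
    have key2 := congrArg (fun w => (inner ℂ w (n - m) : ℂ).re) key
    have hsk' : (inner ℂ (A u - A v) (n - m) : ℂ).re = 0 := by
      have h1 : A u - A v = A ⟨n - m, hHa_sub hdN⟩ + (A ⟨r, hrm⟩ - A ⟨s, hsm⟩) := by
        rw [hsub]; abel
      rw [h1, inner_add_left, inner_sub_left, hr0, hs0, sub_zero, add_zero]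
      exact hsk
    simp only [inner_add_left] at key2
    rw [inner_sub_left (Mt m), hMn, sub_self, add_zero, ← Complex.coe_smul, inner_smul_left,
      Complex.conj_ofReal, Complex.add_re, Complex.re_ofReal_mul, hsk', mul_zero, add_zero] at key2
    have h1 := hM (n - m)
    have h2 : (inner ℂ (Mt s - M r) (n - m) : ℂ).re ≤ ‖Mt s - M r‖ * ‖n - m‖ :=
      re_inner_le_norm (𝕜 := ℂ) _ _
    have h3 : ‖Mt s - M r‖ ≤ ‖M‖ * ‖r‖ + ‖Mt‖ * ‖s‖ := by
      linarith [norm_sub_le (Mt s) (M r), M.le_opNorm r, Mt.le_opNorm s]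
    by_cases h0 : ‖n - m‖ = 0
    · rw [h0, zero_mul]; positivity
    have h0' : 0 < ‖n - m‖ := lt_of_le_of_ne (norm_nonneg _) (Ne.symm h0)
    have h4 : (‖n - m‖ * c) * ‖n - m‖ ≤ ‖Mt s - M r‖ * ‖n - m‖ := by nlinarith
    exact (le_of_mul_le_mul_right h4 h0').trans h3
  have hfin : ‖(u : H) - v‖ ≤ (1 + ‖M‖ / c) * ‖r‖ + (1 + ‖Mt‖ / c) * ‖s‖ := by
    have h1 : (u : H) - v = (n - m) + (r - s) := by rw [hunr, hvms]; abel
    calc ‖(u : H) - v‖ ≤ ‖n - m‖ + ‖r - s‖ := by rw [h1]; exact norm_add_le _ _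
      _ ≤ (‖M‖ * ‖r‖ + ‖Mt‖ * ‖s‖) / c + (‖r‖ + ‖s‖) := add_le_add hd (norm_sub_le _ _)
      _ = _ := by ring
  have ha : 0 ≤ 1 + ‖M‖ / c := by positivity
  have hb : 0 ≤ 1 + ‖Mt‖ / c := by positivity
  have g1 := mul_le_mul_of_nonneg_left hr ha
  have g2 := mul_le_mul_of_nonneg_left hs hb
  have g3 : 0 ≤ (C_R * (1 + ‖M‖ / c) ^ 2 + C_R + (C_R * (1 + ‖Mt‖ / c) ^ 2 + C_R)) * ε * ‖f‖ := by
    positivity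
  nlinarith
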